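/- Let F be a field of characteristic not 2 and let M = [[a,b,c],[x,y,z],[u,v,w]] be the generic 3×3 matrix over R = F[a,...,w]. Then the radical of the ideal P_2(M) of 2×2 subpermanents equals P_2(M) + ⟨products x_{1p}x_{2q}x_{3r} of entries from three distinct rows and three distinct columns⟩, i.e., rad(P_2(M)) = P_2(M) + ⟨ayw, azv, bxw, bzu, cxv, cyu⟩. -/

import Mathlib

open MvPolynomial

/-!
Modulo `P₂`, every product of two entries of one row with an entry of another row, in three
different columns, is zero, since `2` is invertible; likewise for columns. It follows that the
square of a transversal product of three entries lies in `P₂`.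

Conversely, let `J` be `P₂` together with the transversal products. A monomial outside `J` involves
only variables of one row, one column, or one `2 × 2` block. Setting all other variables to zero
maps `J` to `0` in the first two cases, and into the ideal generated by the permanent of the block
in the third. That ideal is contained in `J`, and it is radical because the leading monomial of its
generator is squarefree. So if a power of `f` lies in `J`, the monomials of `f` outside `J` can be
removed a row, column or block at a time by subtracting elements of `J`.
-/

section KeepVars

variable {σ R : Type*} [CommRing R]

variable (R) in
/-- The endomorphism of the polynomial ring setting the variables outside `A` to zero. Unlike
`MvPolynomial.killCompl` it keeps the ambient ring, so that it can act on an ideal. -/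
noncomputable def keepVars (A : Set σ) : MvPolynomial σ R →ₐ[R] MvPolynomial σ R :=
  aeval (A.indicator X)

lemma keepVars_X_of_mem {A : Set σ} {i : σ} (hi : i ∈ A) : keepVars R A (X i) = X i := by
  rw [keepVars, aeval_X, Set.indicator_of_mem hi]

lemma keepVars_X_of_notMem {A : Set σ} {i : σ} (hi : i ∉ A) : keepVars R A (X i) = 0 := by
  rw [keepVars, aeval_X, Set.indicator_of_notMem hi]

lemma keepVars_monomial_of_subset {A : Set σ} {d : σ →₀ ℕ} (hd : ↑d.support ⊆ A) (c : R) :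
    keepVars R A (monomial d c) = monomial d c := by
  rw [monomial_eq, map_mul, algHom_C, algebraMap_eq, Finsupp.prod, map_prod]
  congr 1
  refine Finset.prod_congr rfl fun i hi => ?_
  rw [map_pow, keepVars_X_of_mem (hd hi)]

lemma keepVars_monomial_of_not_subset {A : Set σ} {d : σ →₀ ℕ} (hd : ¬ ↑d.support ⊆ A) (c : R) :
    keepVars R A (monomial d c) = 0 := by
  obtain ⟨i, hi, hiA⟩ := Set.not_subset.mp hd
  rw [monomial_eq, map_mul, Finsupp.prod, map_prod, Finset.prod_eq_zero hi, mul_zero]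
  rw [map_pow, keepVars_X_of_notMem hiA, zero_pow (Finsupp.mem_support_iff.mp hi)]

lemma coeff_keepVars_of_subset {A : Set σ} {d : σ →₀ ℕ} (hd : ↑d.support ⊆ A)
    (f : MvPolynomial σ R) : coeff d (keepVars R A f) = coeff d f := by
  classical
  induction f using MvPolynomial.induction_on' with
  | monomial e c =>
    by_cases he : ↑e.support ⊆ A
    · rw [keepVars_monomial_of_subset he]
    · have hed : e ≠ d := fun h => he (h ▸ hd)
      rw [keepVars_monomial_of_not_subset he, coeff_zero, coeff_monomial, if_neg hed]
  | add p q hp hq => rw [map_add, coeff_add, hp, hq, coeff_add]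

lemma coeff_keepVars_of_not_subset {A : Set σ} {d : σ →₀ ℕ} (hd : ¬ ↑d.support ⊆ A)
    (f : MvPolynomial σ R) : coeff d (keepVars R A f) = 0 := by
  classical
  induction f using MvPolynomial.induction_on' with
  | monomial e c =>
    by_cases he : ↑e.support ⊆ A
    · have hed : e ≠ d := fun h => hd (h ▸ he)
      rw [keepVars_monomial_of_subset he, coeff_monomial, if_neg hed]
    · rw [keepVars_monomial_of_not_subset he, coeff_zero]
  | add p q hp hq => rw [map_add, coeff_add, hp, hq, add_zero]

lemma support_sub_keepVars_ssubset {A : Set σ} {d : σ →₀ ℕ} {f : MvPolynomial σ R}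
    (hdf : d ∈ f.support) (hdA : ↑d.support ⊆ A) :
    (f - keepVars R A f).support ⊂ f.support := by
  refine Finset.ssubset_iff_subset_ne.mpr ⟨fun e he => ?_, fun h => ?_⟩
  · rw [mem_support_iff, coeff_sub] at he
    rw [mem_support_iff]
    by_cases heA : ↑e.support ⊆ A
    · rw [coeff_keepVars_of_subset heA, sub_self] at he
      exact absurd rfl he
    · rwa [coeff_keepVars_of_not_subset heA, sub_zero] at he
  · rw [← h, mem_support_iff, coeff_sub, coeff_keepVars_of_subset hdA, sub_self] at hdf
    exact hdf rfl

theorem isRadical_of_forall_monomial_mem_or_keepVars {J : Ideal (MvPolynomial σ R)}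
    (h : ∀ d : σ →₀ ℕ, monomial d 1 ∈ J ∨
      ∃ A : Set σ, ↑d.support ⊆ A ∧ ∃ K ≤ J, K.IsRadical ∧ J ≤ K.comap (keepVars R A)) :
    J.IsRadical := by
  intro f hf
  induction hs : f.support using Finset.strongInduction generalizing f with
  | H s ih =>
    subst hs
    by_cases hmon : ∀ d ∈ f.support, monomial d 1 ∈ J
    · rw [f.as_sum]
      refine J.sum_mem fun d hd => ?_
      rw [← mul_one (coeff d f), ← C_mul_monomial]
      exact J.mul_mem_left _ (hmon d hd)
    · push Not at hmon
      obtain ⟨d, hdf, hdJ⟩ := hmon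
      obtain ⟨A, hdA, K, hKJ, hK, hJK⟩ := (h d).resolve_left hdJ
      have hkeep : keepVars R A f ∈ J := hKJ ((hK.comap _).radical_le_iff.mpr hJK hf)
      rw [← sub_add_cancel f (keepVars R A f)]
      exact J.add_mem (ih _ (support_sub_keepVars_ssubset hdf hdA)
        (J.radical.sub_mem hf (Ideal.le_radical hkeep)) rfl) hkeep

end KeepVars

section Monomials

universe u

lemma nonempty_monomialOrder (σ : Type u) : Nonempty (MonomialOrder.{u, u} σ) := by
  obtain ⟨_, hwf⟩ := exists_wellFoundedLT σ
  let _ : LinearOrder σ := inferInstanceAs (LinearOrder σᵒᵈ)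
  have : WellFoundedGT σ := ⟨hwf.wf⟩
  exact ⟨MonomialOrder.lex⟩

variable {σ R : Type*} [CommRing R]

lemma prod_X_dvd_monomial {s : Finset σ} {d : σ →₀ ℕ} (hs : s ⊆ d.support) (c : R) :
    ∏ i ∈ s, X i ∣ monomial d c := by
  rw [monomial_eq]
  refine Dvd.dvd.mul_left ((Finset.prod_dvd_prod_of_dvd _ _ fun i hi => ?_).trans
    (Finset.prod_dvd_prod_of_subset s d.support _ hs)) _
  exact dvd_pow_self _ (Finsupp.mem_support_iff.mp (hs hi))

lemma monomial_mem_of_mul_X_mem {J : Ideal (MvPolynomial σ R)} {d : σ →₀ ℕ}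
    {x y z : σ} (hx : x ∈ d.support) (hy : y ∈ d.support) (hz : z ∈ d.support)
    (hxy : x ≠ y) (hxz : x ≠ z) (hyz : y ≠ z) (h : X x * X y * X z ∈ J) (c : R) :
    monomial d c ∈ J := by
  classical
  have hs : {x, y, z} ⊆ d.support := by
    simp only [Finset.insert_subset_iff, Finset.singleton_subset_iff]
    exact ⟨hx, hy, hz⟩
  refine J.mem_of_dvd (prod_X_dvd_monomial hs c) ?_
  rwa [Finset.prod_insert (by simp [hxy, hxz]), Finset.prod_pair hyz, ← mul_assoc]

lemma isRadical_span_singleton_of_squarefree_degree [IsReduced R] (ord : MonomialOrder σ)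
    {g : MvPolynomial σ R} (hunit : IsUnit (ord.leadingCoeff g)) (hsq : ∀ i, ord.degree g i ≤ 1) :
    (Ideal.span {g}).IsRadical := by
  rintro f ⟨k, hf⟩
  obtain ⟨q, r, hfqr, -, hr⟩ := ord.div_single hunit f
  have hr_eq : r = f - q * g := by rw [hfqr, add_sub_cancel_left]
  have hr_pow : r ^ k ∈ Ideal.span {g} := by
    rw [Ideal.mem_span_singleton] at hf ⊢
    have hsub : f - r ∣ f ^ k - r ^ k := sub_dvd_pow_sub_pow f r k
    rw [hr_eq, sub_sub_cancel, ← hr_eq] at hsub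
    exact (dvd_sub_right hf).mp ((dvd_mul_left g q).trans hsub)
  suffices hr0 : r = 0 by
    rw [hfqr, hr0, add_zero]
    exact Ideal.mul_mem_left _ _ (Ideal.mem_span_singleton_self g)
  by_contra hr0
  refine hr _ (ord.degree_mem_support hr0) fun i => ?_
  obtain ⟨h, hgh⟩ := Ideal.mem_span_singleton.mp hr_pow
  have hh : h ≠ 0 := by
    rintro rfl
    exact pow_ne_zero k hr0 (hgh.trans (mul_zero g))
  have hdeg : k • ord.degree r = ord.degree g + ord.degree h := by
    rw [← ord.degree_pow, hgh,
      ord.degree_mul_of_left_mem_nonZeroDivisors hunit.mem_nonZeroDivisors hh]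
  have hdeg_i : k * ord.degree r i = ord.degree g i + ord.degree h i :=
    DFunLike.congr_fun hdeg i
  rcases Nat.eq_zero_or_pos (ord.degree r i) with hri | hri
  · rw [hri, mul_zero] at hdeg_i
    omega
  · exact (hsq i).trans hri

lemma isRadical_span_monomial_add_monomial [IsReduced R] {s t : σ →₀ ℕ} (hst : s ≠ t)
    (hs : ∀ i, s i ≤ 1) (ht : ∀ i, t i ≤ 1) :
    (Ideal.span {monomial s (1 : R) + monomial t 1}).IsRadical := by
  classical
  rcases subsingleton_or_nontrivial R with _ | _
  · exact fun f _ => Subsingleton.elim 0 f ▸ Ideal.zero_mem _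
  obtain ⟨ord⟩ := nonempty_monomialOrder σ
  wlog hlt : ord.toSyn t < ord.toSyn s generalizing s t
  · rw [add_comm]
    exact this hst.symm ht hs ((not_lt.mp hlt).lt_of_ne fun h => hst (ord.toSyn.injective h))
  have hdeg : ord.degree (monomial s (1 : R) + monomial t 1) = s := by
    rw [ord.degree_add_of_lt] <;> simp [ord.degree_monomial, hlt]
  refine isRadical_span_singleton_of_squarefree_degree ord ?_ (by rwa [hdeg])
  rw [MonomialOrder.leadingCoeff, hdeg, coeff_add, coeff_monomial, coeff_monomial, if_pos rfl,
    if_neg hst.symm, add_zero]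
  exact isUnit_one

end Monomials

section Ideals

variable {m n S : Type*} [CommRing S]

/-- The ideal `P_k(M)` generated by the permanents of the `k × k` submatrices of `M`. Rows and
columns are chosen by arbitrary injections, which only repeats each generator. -/
def permanentalIdeal (k : ℕ) (M : Matrix m n S) : Ideal S :=
  Ideal.span (Set.range fun e : (Fin k ↪ m) × (Fin k ↪ n) => (M.submatrix e.1 e.2).permanent)

/-- The ideal generated by the products of `k` entries of `M` taken from `k` distinct rows and `k`
distinct columns. -/
def transversalIdeal (k : ℕ) (M : Matrix m n S) : Ideal S :=
  Ideal.span (Set.range fun e : (Fin k ↪ m) × (Fin k ↪ n) => ∏ t, M (e.1 t) (e.2 t))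

lemma permanentalIdeal_transpose (k : ℕ) (M : Matrix m n S) :
    permanentalIdeal k M.transpose = permanentalIdeal k M := by
  rw [permanentalIdeal, permanentalIdeal, ← (Equiv.prodComm _ _).surjective.range_comp]
  congr 2
  ext e : 1
  exact Matrix.permanent_transpose (M.submatrix e.1 e.2)

lemma transversalIdeal_transpose (k : ℕ) (M : Matrix m n S) :
    transversalIdeal k M.transpose = transversalIdeal k M := by
  rw [transversalIdeal, transversalIdeal, ← (Equiv.prodComm _ _).surjective.range_comp]
  rfl

lemma permanentalIdeal_le_iff {k : ℕ} {M : Matrix m n S} {I : Ideal S} :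
    permanentalIdeal k M ≤ I ↔
      ∀ (r : Fin k ↪ m) (c : Fin k ↪ n), (M.submatrix r c).permanent ∈ I := by
  rw [permanentalIdeal, Ideal.span_le, Set.range_subset_iff, Prod.forall]
  rfl

lemma transversalIdeal_le_iff {k : ℕ} {M : Matrix m n S} {I : Ideal S} :
    transversalIdeal k M ≤ I ↔
      ∀ (r : Fin k ↪ m) (c : Fin k ↪ n), ∏ t, M (r t) (c t) ∈ I := by
  rw [transversalIdeal, Ideal.span_le, Set.range_subset_iff, Prod.forall]
  rfl

lemma permanentalIdeal_le_transversalIdeal (k : ℕ) (M : Matrix m n S) :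
    permanentalIdeal k M ≤ transversalIdeal k M :=
  permanentalIdeal_le_iff.mpr fun r c => Ideal.sum_mem _ fun σ _ =>
    transversalIdeal_le_iff.mp le_rfl (σ.toEmbedding.trans r) c

lemma permanent_fin_two (M : Matrix (Fin 2) (Fin 2) S) :
    M.permanent = M 0 0 * M 1 1 + M 1 0 * M 0 1 := by
  have huniv : (Finset.univ : Finset (Equiv.Perm (Fin 2))) = {1, Equiv.swap 0 1} := by decide
  rw [Matrix.permanent, huniv, Finset.sum_pair (by decide), Fin.prod_univ_two, Fin.prod_univ_two]
  rfl

lemma mul_add_mul_mem_permanentalIdeal (M : Matrix m n S) {i k : m} {j l : n}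
    (hik : i ≠ k) (hjl : j ≠ l) :
    M i j * M k l + M k j * M i l ∈ permanentalIdeal 2 M := by
  have hrows : Function.Injective ![i, k] := by
    simpa [Function.Injective, Fin.forall_fin_two] using ⟨hik, hik.symm⟩
  have hcols : Function.Injective ![j, l] := by
    simpa [Function.Injective, Fin.forall_fin_two] using ⟨hjl, hjl.symm⟩
  have hmem := permanentalIdeal_le_iff.mp (le_refl (permanentalIdeal 2 M)) ⟨_, hrows⟩ ⟨_, hcols⟩
  rwa [permanent_fin_two] at hmem

lemma permanentalIdeal_two_eq_span_lt [LinearOrder m] [LinearOrder n] (M : Matrix m n S) :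
    permanentalIdeal 2 M = Ideal.span {f | ∃ i k j l, i < k ∧ j < l ∧
      f = M i j * M k l + M k j * M i l} := by
  refine le_antisymm (permanentalIdeal_le_iff.mpr fun r c => ?_) (Ideal.span_le.mpr ?_)
  · have hr : r 0 ≠ r 1 := r.injective.ne (by decide)
    have hc : c 0 ≠ c 1 := c.injective.ne (by decide)
    simp only [permanent_fin_two, Matrix.submatrix_apply]
    rcases hr.lt_or_gt with hr | hr <;> rcases hc.lt_or_gt with hc | hc
    · exact Ideal.subset_span ⟨r 0, r 1, c 0, c 1, hr, hc, rfl⟩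
    · exact Ideal.subset_span ⟨r 0, r 1, c 1, c 0, hr, hc, by ring⟩
    · exact Ideal.subset_span ⟨r 1, r 0, c 0, c 1, hr, hc, by ring⟩
    · exact Ideal.subset_span ⟨r 1, r 0, c 1, c 0, hr, hc, by ring⟩
  · rintro _ ⟨i, k, j, l, hik, hjl, rfl⟩
    exact mul_add_mul_mem_permanentalIdeal M hik.ne hjl.ne

lemma mul_mul_mem_transversalIdeal (M : Matrix m n S) {i k p : m} {j l q : n}
    (hik : i ≠ k) (hip : i ≠ p) (hkp : k ≠ p) (hjl : j ≠ l) (hjq : j ≠ q) (hlq : l ≠ q) :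
    M i j * M k l * M p q ∈ transversalIdeal 3 M := by
  have hrows : Function.Injective ![i, k, p] := by
    simp [Function.Injective, Fin.forall_fin_succ, hik, hip, hkp, hik.symm, hip.symm, hkp.symm]
  have hcols : Function.Injective ![j, l, q] := by
    simp [Function.Injective, Fin.forall_fin_succ, hjl, hjq, hlq, hjl.symm, hjq.symm, hlq.symm]
  have hmem := transversalIdeal_le_iff.mp (le_refl (transversalIdeal 3 M)) ⟨_, hrows⟩ ⟨_, hcols⟩
  rwa [Fin.prod_univ_three] at hmem

lemma transversalIdeal_three_eq_span (M : Matrix (Fin 3) (Fin 3) S) :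
    transversalIdeal 3 M = Ideal.span {M 0 0 * M 1 1 * M 2 2, M 0 0 * M 1 2 * M 2 1,
      M 0 1 * M 1 0 * M 2 2, M 0 1 * M 1 2 * M 2 0, M 0 2 * M 1 0 * M 2 1,
      M 0 2 * M 1 1 * M 2 0} := by
  refine le_antisymm (transversalIdeal_le_iff.mpr fun r c => ?_) (Ideal.span_le.mpr ?_)
  · let σ : Equiv.Perm (Fin 3) := (Equiv.ofBijective r r.injective.bijective_of_finite).symm.trans
      (Equiv.ofBijective c c.injective.bijective_of_finite)
    have hprod : ∏ t, M (r t) (c t) = M 0 (σ 0) * M 1 (σ 1) * M 2 (σ 2) := by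
      rw [← Fin.prod_univ_three fun i => M i (σ i)]
      exact Fintype.prod_equiv (Equiv.ofBijective r r.injective.bijective_of_finite) _ _
        fun t => by simp [σ]
    have hcases : ∀ τ : Equiv.Perm (Fin 3), (τ 0 = 0 ∧ τ 1 = 1 ∧ τ 2 = 2) ∨
        (τ 0 = 0 ∧ τ 1 = 2 ∧ τ 2 = 1) ∨ (τ 0 = 1 ∧ τ 1 = 0 ∧ τ 2 = 2) ∨
        (τ 0 = 1 ∧ τ 1 = 2 ∧ τ 2 = 0) ∨ (τ 0 = 2 ∧ τ 1 = 0 ∧ τ 2 = 1) ∨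
        (τ 0 = 2 ∧ τ 1 = 1 ∧ τ 2 = 0) := by decide
    apply Ideal.subset_span
    simp only [hprod, Set.mem_insert_iff, Set.mem_singleton_iff]
    rcases hcases σ with h | h | h | h | h | h <;> simp [h]
  · rintro _ (rfl | rfl | rfl | rfl | rfl | rfl) <;>
      exact mul_mul_mem_transversalIdeal M (by decide) (by decide) (by decide) (by decide)
        (by decide) (by decide)

lemma mul_mul_mem_permanentalIdeal_of_row (h2 : IsUnit (2 : S)) (M : Matrix m n S) {i k : m}
    {j l q : n} (hik : i ≠ k) (hjl : j ≠ l) (hjq : j ≠ q) (hlq : l ≠ q) :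
    M i j * M i l * M k q ∈ permanentalIdeal 2 M := by
  have hperm {j l : n} (hjl : j ≠ l) := mul_add_mul_mem_permanentalIdeal M hik hjl
  rw [← Ideal.unit_mul_mem_iff_mem _ h2]
  have htwo : 2 * (M i j * M i l * M k q) =
      M i j * (M i l * M k q + M k l * M i q) - M i q * (M i j * M k l + M k j * M i l) +
        M i l * (M i j * M k q + M k j * M i q) := by ring
  rw [htwo]
  exact add_mem (sub_mem (Ideal.mul_mem_left _ _ (hperm hlq)) (Ideal.mul_mem_left _ _ (hperm hjl)))
    (Ideal.mul_mem_left _ _ (hperm hjq))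

lemma sq_mul_mul_mem_permanentalIdeal (h2 : IsUnit (2 : S)) (M : Matrix m n S) {i k p : m}
    {j l q : n} (hik : i ≠ k) (hkp : k ≠ p) (hjl : j ≠ l) (hjq : j ≠ q) (hlq : l ≠ q) :
    (M i j * M k l * M p q) ^ 2 ∈ permanentalIdeal 2 M := by
  have hik_perm := mul_add_mul_mem_permanentalIdeal M hik hjl
  have hkp_perm := mul_add_mul_mem_permanentalIdeal M hkp hjq
  have hrow := mul_mul_mem_permanentalIdeal_of_row h2 M hik.symm hlq hjl.symm hjq.symm
  -- Two exchanges of columns between rows create two factors in row `k` and one in row `i`.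
  have hsq : (M i j * M k l * M p q) ^ 2 =
      (M i j * M k l * M p q * M p q) * (M i j * M k l + M k j * M i l) -
        (M i j * M k l * M p q * M i l) * (M k j * M p q + M p j * M k q) +
        (M p q * M i l * M p j) * (M k l * M k q * M i j) := by ring
  rw [hsq]
  exact add_mem (sub_mem (Ideal.mul_mem_left _ _ hik_perm) (Ideal.mul_mem_left _ _ hkp_perm))
    (Ideal.mul_mem_left _ _ hrow)

lemma transversalIdeal_three_le_radical (h2 : IsUnit (2 : S)) (M : Matrix m n S) :
    transversalIdeal 3 M ≤ (permanentalIdeal 2 M).radical := by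
  refine transversalIdeal_le_iff.mpr fun r c => ⟨2, ?_⟩
  rw [Fin.prod_univ_three]
  exact sq_mul_mul_mem_permanentalIdeal h2 M (r.injective.ne (by decide))
    (r.injective.ne (by decide)) (c.injective.ne (by decide)) (c.injective.ne (by decide))
    (c.injective.ne (by decide))

lemma mul_mul_mem_permanentalIdeal_sup_of_columns_ne (h2 : IsUnit (2 : S)) (M : Matrix m n S)
    {i k p : m} {j l q : n} (hrow : ¬ (i = k ∧ k = p)) (hjl : j ≠ l) (hjq : j ≠ q) (hlq : l ≠ q) :
    M i j * M k l * M p q ∈ permanentalIdeal 2 M ⊔ transversalIdeal 3 M := by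
  by_cases hik : i = k
  · subst hik
    have hip : i ≠ p := fun h => hrow ⟨rfl, h⟩
    exact Ideal.mem_sup_left (mul_mul_mem_permanentalIdeal_of_row h2 M hip hjl hjq hlq)
  by_cases hip : i = p
  · subst hip
    rw [mul_right_comm]
    exact Ideal.mem_sup_left (mul_mul_mem_permanentalIdeal_of_row h2 M hik hjq hjl hlq.symm)
  by_cases hkp : k = p
  · subst hkp
    rw [mul_assoc, mul_comm]
    exact Ideal.mem_sup_left
      (mul_mul_mem_permanentalIdeal_of_row h2 M (Ne.symm hik) hlq hjl.symm hjq.symm)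
  exact Ideal.mem_sup_right (mul_mul_mem_transversalIdeal M hik hip hkp hjl hjq hlq)

lemma mul_mul_mem_permanentalIdeal_sup_of_rows_ne (h2 : IsUnit (2 : S)) (M : Matrix m n S)
    {i k p : m} {j l q : n} (hcol : ¬ (j = l ∧ l = q)) (hik : i ≠ k) (hip : i ≠ p) (hkp : k ≠ p) :
    M i j * M k l * M p q ∈ permanentalIdeal 2 M ⊔ transversalIdeal 3 M := by
  rw [← permanentalIdeal_transpose, ← transversalIdeal_transpose]
  exact mul_mul_mem_permanentalIdeal_sup_of_columns_ne h2 M.transpose hcol hik hip hkp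

end Ideals

lemma exists_triple_image_ne_not_const {α β γ : Type*} [DecidableEq β] [DecidableEq γ]
    {s : Finset α} {f : α → β} {g : α → γ} (hf : 1 < (s.image f).card)
    (hg : 2 < (s.image g).card) :
    ∃ x ∈ s, ∃ y ∈ s, ∃ z ∈ s, ¬ (f x = f y ∧ f y = f z) ∧
      g x ≠ g y ∧ g x ≠ g z ∧ g y ≠ g z := by
  simp only [Finset.two_lt_card, Finset.exists_mem_image] at hg
  obtain ⟨x, hx, y, hy, z, hz, hxy, hxz, hyz⟩ := hg
  by_cases hconst : f x = f y ∧ f y = f z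
  · obtain ⟨hfxy, hfyz⟩ := hconst
    obtain ⟨w, hw, hwx⟩ := Finset.exists_mem_image.mp (Finset.exists_mem_ne hf (f x))
    -- `w` replaces a point with the same value under `g`, or else any point.
    by_cases hwy : g w = g y
    · exact ⟨x, hx, w, hw, z, hz, by grind⟩
    by_cases hwz : g w = g z
    · exact ⟨x, hx, y, hy, w, hw, by grind⟩
    exact ⟨w, hw, y, hy, z, hz, by grind⟩
  · exact ⟨x, hx, y, hy, z, hz, hconst, hxy, hxz, hyz⟩

section GenericMatrix

open Matrix (mvPolynomialX)

variable {m n R : Type*} [CommRing R]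

lemma isUnit_two_mvPolynomial {σ : Type*} (h2 : IsUnit (2 : R)) :
    IsUnit (2 : MvPolynomial σ R) :=
  map_ofNat (C : R →+* MvPolynomial σ R) 2 ▸ h2.map C

lemma monomial_mem_of_two_lt_card_columns [DecidableEq m] [DecidableEq n] (h2 : IsUnit (2 : R))
    {d : m × n →₀ ℕ} (hrow : 1 < (d.support.image Prod.fst).card)
    (hcol : 2 < (d.support.image Prod.snd).card) (c : R) :
    monomial d c ∈
      permanentalIdeal 2 (mvPolynomialX m n R) ⊔ transversalIdeal 3 (mvPolynomialX m n R) := by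
  obtain ⟨x, hx, y, hy, z, hz, hne, hxy, hxz, hyz⟩ := exists_triple_image_ne_not_const hrow hcol
  refine monomial_mem_of_mul_X_mem hx hy hz (ne_of_apply_ne _ hxy) (ne_of_apply_ne _ hxz)
    (ne_of_apply_ne _ hyz) ?_ c
  exact mul_mul_mem_permanentalIdeal_sup_of_columns_ne (isUnit_two_mvPolynomial h2)
    (mvPolynomialX m n R) hne hxy hxz hyz

lemma monomial_mem_of_two_lt_card_rows [DecidableEq m] [DecidableEq n] (h2 : IsUnit (2 : R))
    {d : m × n →₀ ℕ} (hrow : 2 < (d.support.image Prod.fst).card)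
    (hcol : 1 < (d.support.image Prod.snd).card) (c : R) :
    monomial d c ∈
      permanentalIdeal 2 (mvPolynomialX m n R) ⊔ transversalIdeal 3 (mvPolynomialX m n R) := by
  obtain ⟨x, hx, y, hy, z, hz, hne, hxy, hxz, hyz⟩ := exists_triple_image_ne_not_const hcol hrow
  refine monomial_mem_of_mul_X_mem hx hy hz (ne_of_apply_ne _ hxy) (ne_of_apply_ne _ hxz)
    (ne_of_apply_ne _ hyz) ?_ c
  exact mul_mul_mem_permanentalIdeal_sup_of_rows_ne (isUnit_two_mvPolynomial h2)
    (mvPolynomialX m n R) hne hxy hxz hyz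

lemma transversalIdeal_le_ker_keepVars {k : ℕ} {I : Finset m} {K : Finset n}
    (hIK : I.card < k ∨ K.card < k) :
    transversalIdeal k (mvPolynomialX m n R) ≤
      RingHom.ker (keepVars R ((I : Set m) ×ˢ (K : Set n))) := by
  refine transversalIdeal_le_iff.mpr fun r c => ?_
  have hout : ∃ t, (r t, c t) ∉ (I : Set m) ×ˢ (K : Set n) := by
    by_contra! hin
    have hI := Finset.card_le_card_of_injOn (s := Finset.univ) r (fun t _ => (hin t).1)
      r.injective.injOn
    have hK := Finset.card_le_card_of_injOn (s := Finset.univ) c (fun t _ => (hin t).2)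
      c.injective.injOn
    rw [Finset.card_fin] at hI hK
    omega
  obtain ⟨t, ht⟩ := hout
  rw [RingHom.mem_ker, map_prod]
  exact Finset.prod_eq_zero (Finset.mem_univ t) (keepVars_X_of_notMem ht)

lemma permanentalIdeal_sup_transversalIdeal_le_ker_keepVars {I : Finset m} {K : Finset n}
    (hIK : I.card < 2 ∨ K.card < 2) :
    permanentalIdeal 2 (mvPolynomialX m n R) ⊔ transversalIdeal 3 (mvPolynomialX m n R) ≤
      RingHom.ker (keepVars R ((I : Set m) ×ˢ (K : Set n))) :=
  sup_le ((permanentalIdeal_le_transversalIdeal 2 _).trans (transversalIdeal_le_ker_keepVars hIK))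
    (transversalIdeal_le_ker_keepVars (by omega))

lemma permanentalIdeal_two_le_comap_keepVars (i k : m) (j l : n) :
    permanentalIdeal 2 (mvPolynomialX m n R) ≤
      (Ideal.span {X (i, j) * X (k, l) + X (k, j) * X (i, l)}).comap
        (keepVars R (({i, k} : Set m) ×ˢ ({j, l} : Set n))) := by
  refine permanentalIdeal_le_iff.mpr fun r c => ?_
  have hr : r 0 ≠ r 1 := r.injective.ne (by decide)
  have hc : c 0 ≠ c 1 := c.injective.ne (by decide)
  have hX (a : m) (b : n) (hab : a ∉ ({i, k} : Set m) ∨ b ∉ ({j, l} : Set n)) :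
      keepVars R (({i, k} : Set m) ×ˢ ({j, l} : Set n)) (X (a, b)) = 0 :=
    keepVars_X_of_notMem fun h => hab.elim (fun ha => ha h.1) (fun hb => hb h.2)
  simp only [Ideal.mem_comap, permanent_fin_two, Matrix.submatrix_apply,
    Matrix.mvPolynomialX_apply, map_add, map_mul]
  by_cases hin : (∀ t, r t ∈ ({i, k} : Set m)) ∧ ∀ t, c t ∈ ({j, l} : Set n)
  · obtain ⟨hrin, hcin⟩ := hin
    have hXin (s t : Fin 2) := keepVars_X_of_mem (R := R) (Set.mk_mem_prod (hrin s) (hcin t))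
    rw [hXin, hXin, hXin, hXin, Ideal.mem_span_singleton]
    apply dvd_of_eq
    grind
  · have hout : r 0 ∉ ({i, k} : Set m) ∨ r 1 ∉ ({i, k} : Set m) ∨
        c 0 ∉ ({j, l} : Set n) ∨ c 1 ∉ ({j, l} : Set n) := by
      simp only [Fin.forall_fin_two] at hin
      tauto
    rcases hout with h | h | h | h <;> simp [hX, h]

lemma isRadical_span_mul_add_mul [IsReduced R] {i k : m} {j l : n} (hik : i ≠ k) (hjl : j ≠ l) :
    (Ideal.span {(X (i, j) * X (k, l) + X (k, j) * X (i, l) :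
      MvPolynomial (m × n) R)}).IsRadical := by
  classical
  have hperm : (X (i, j) * X (k, l) + X (k, j) * X (i, l) : MvPolynomial (m × n) R) =
      monomial (.single (i, j) 1 + .single (k, l) 1) 1 +
        monomial (.single (k, j) 1 + .single (i, l) 1) 1 := by
    simp only [X, monomial_mul, mul_one]
  rw [hperm]
  refine isRadical_span_monomial_add_monomial (fun h => ?_) (fun x => ?_) fun x => ?_
  · have hij := DFunLike.congr_fun h (i, j)
    simp [hik, hjl] at hij
  all_goals
    rw [Finsupp.add_apply, Finsupp.single_apply, Finsupp.single_apply]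
    split_ifs <;> grind

theorem isRadical_permanentalIdeal_sup_transversalIdeal [IsReduced R] (h2 : IsUnit (2 : R)) :
    (permanentalIdeal 2 (mvPolynomialX m n R) ⊔
      transversalIdeal 3 (mvPolynomialX m n R)).IsRadical := by
  classical
  refine isRadical_of_forall_monomial_mem_or_keepVars fun d => ?_
  set rows := d.support.image Prod.fst
  set cols := d.support.image Prod.snd
  have hd : (d.support : Set (m × n)) ⊆ (rows : Set m) ×ˢ (cols : Set n) := fun x hx =>
    ⟨Finset.mem_image_of_mem _ hx, Finset.mem_image_of_mem _ hx⟩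
  by_cases hlt : rows.card < 2 ∨ cols.card < 2
  · exact Or.inr ⟨_, hd, ⊥, bot_le, Ideal.isRadical_bot,
      permanentalIdeal_sup_transversalIdeal_le_ker_keepVars hlt⟩
  push Not at hlt
  rcases hlt.1.eq_or_lt with hrow | hrow
  · rcases hlt.2.eq_or_lt with hcol | hcol
    · obtain ⟨i, k, hik, hrows_eq⟩ := Finset.card_eq_two.mp hrow.symm
      obtain ⟨j, l, hjl, hcols_eq⟩ := Finset.card_eq_two.mp hcol.symm
      refine Or.inr ⟨_, hd, Ideal.span {X (i, j) * X (k, l) + X (k, j) * X (i, l)}, ?_,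
        isRadical_span_mul_add_mul hik hjl, sup_le ?_ ?_⟩
      · rw [Ideal.span_singleton_le_iff_mem]
        exact Ideal.mem_sup_left
          (mul_add_mul_mem_permanentalIdeal (mvPolynomialX m n R) hik hjl)
      · rw [hrows_eq, hcols_eq, Finset.coe_pair, Finset.coe_pair]
        exact permanentalIdeal_two_le_comap_keepVars i k j l
      · exact (transversalIdeal_le_ker_keepVars (by omega)).trans (Ideal.comap_mono bot_le)
    · exact Or.inl (monomial_mem_of_two_lt_card_columns h2 hlt.1 hcol 1)
  · exact Or.inl (monomial_mem_of_two_lt_card_rows h2 hrow hlt.2 1)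

theorem radical_permanental_three_by_three_general [IsReduced R] (h2 : IsUnit (2 : R)) :
    (permanentalIdeal 2 (mvPolynomialX m n R)).radical =
      permanentalIdeal 2 (mvPolynomialX m n R) ⊔ transversalIdeal 3 (mvPolynomialX m n R) :=
  le_antisymm ((isRadical_permanentalIdeal_sup_transversalIdeal h2).radical_le_iff.mpr le_sup_left)
    (sup_le Ideal.le_radical
      (transversalIdeal_three_le_radical (isUnit_two_mvPolynomial h2) (mvPolynomialX m n R)))

end GenericMatrix

/-- `M = [[a,b,c],[x,y,z],[u,v,w]]` is the generic 3×3 matrix with entry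
`(i,j)` the variable `X (i,j)`.  The radical of `P₂(M)` equals `P₂(M)` plus
the ideal generated by the six monomials `ayw, azv, bxw, bzu, cxv, cyu`
(the products of entries from three distinct rows and columns). -/
theorem radical_permanental_three_by_three (F : Type*) [Field F] (h2 : (2 : F) ≠ 0) :
    (Ideal.span {f : MvPolynomial (Fin 3 × Fin 3) F |
        ∃ i k j l : Fin 3, i < k ∧ j < l ∧
          f = X (i, j) * X (k, l) + X (k, j) * X (i, l)}).radical =
      Ideal.span {f : MvPolynomial (Fin 3 × Fin 3) F |
        ∃ i k j l : Fin 3, i < k ∧ j < l ∧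
          f = X (i, j) * X (k, l) + X (k, j) * X (i, l)} +
      Ideal.span ({X (0, 0) * X (1, 1) * X (2, 2),
        X (0, 0) * X (1, 2) * X (2, 1),
        X (0, 1) * X (1, 0) * X (2, 2),
        X (0, 1) * X (1, 2) * X (2, 0),
        X (0, 2) * X (1, 0) * X (2, 1),
        X (0, 2) * X (1, 1) * X (2, 0)} :
        Set (MvPolynomial (Fin 3 × Fin 3) F)) := by
  simpa only [permanentalIdeal_two_eq_span_lt, transversalIdeal_three_eq_span,
    Matrix.mvPolynomialX_apply, Submodule.add_eq_sup] using
    radical_permanental_three_by_three_general (m := Fin 3) (n := Fin 3) h2.isUnit
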